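/- Completeness: for all λ-terms t, u, if t ⊑int u then t ⊑B u. -/

import Mathlib

set_option autoImplicit false

/-! ### Players -/

inductive Player : Type
  | white
  | black
deriving DecidableEq

/-- The opposite player. -/
def Player.op : Player → Player
  | .white => .black
  | .black => .white

/-- `gamma p q` is `0` if the players agree (silent) and `1` otherwise (interaction). -/
def Player.gamma (p q : Player) : ℕ := if p = q then 0 else 1

/-! ### Ordinary λ-terms (de Bruijn representation) -/

inductive Lam : Type
  | var : ℕ → Lam
  | lam : Lam → Lam
  | app : Lam → Lam → Lam
deriving DecidableEq

namespace Lam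

/-- Shift the free de Bruijn indices ≥ `d` by one. -/
def liftAt : Lam → ℕ → Lam
  | .var n, d => .var (if n < d then n else n + 1)
  | .lam t, d => .lam (t.liftAt (d + 1))
  | .app t u, d => .app (t.liftAt d) (u.liftAt d)

/-- Capture-avoiding substitution of `u` for the de Bruijn index `x`. -/
def subst : Lam → ℕ → Lam → Lam
  | .var n, x, u => if n = x then u else if x < n then .var (n - 1) else .var n
  | .lam t, x, u => .lam (t.subst (x + 1) (u.liftAt 0))
  | .app t s, x, u => .app (t.subst x u) (s.subst x u)

end Lam

/-- Root β-rule: `(λx.t) u ↦ t[x:=u]`. -/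
inductive LBetaRoot : Lam → Lam → Prop
  | beta (t u : Lam) : LBetaRoot (.app (.lam t) u) (t.subst 0 u)

/-- Root η-rule: `λx. t x ↦ t` with `x ∉ FV(t)` (enforced by the lifting). -/
inductive LEtaRoot : Lam → Lam → Prop
  | eta (t : Lam) : LEtaRoot (.lam (.app (t.liftAt 0) (.var 0))) t

/-- Closure of a root relation under all contexts. -/
inductive LFull (R : Lam → Lam → Prop) : Lam → Lam → Prop
  | root {t u : Lam} : R t u → LFull R t u
  | lam {t u : Lam} : LFull R t u → LFull R (.lam t) (.lam u)
  | appL {t t' : Lam} (u : Lam) : LFull R t t' → LFull R (.app t u) (.app t' u)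
  | appR (t : Lam) {u u' : Lam} : LFull R u u' → LFull R (.app t u) (.app t u')

/-- Closure under applicative spine contexts `⟨·⟩ t1 … tk`. -/
inductive LSpine (R : Lam → Lam → Prop) : Lam → Lam → Prop
  | root {t u : Lam} : R t u → LSpine R t u
  | appL {t t' : Lam} (u : Lam) : LSpine R t t' → LSpine R (.app t u) (.app t' u)

/-- Closure under head contexts `λx1…xn.⟨·⟩ t1 … tk`. -/
inductive LHead (R : Lam → Lam → Prop) : Lam → Lam → Prop
  | spine {t u : Lam} : LSpine R t u → LHead R t u
  | lam {t u : Lam} : LHead R t u → LHead R (.lam t) (.lam u)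

/-- β-reduction. -/
def LBeta : Lam → Lam → Prop := LFull LBetaRoot
/-- η-reduction. -/
def LEta : Lam → Lam → Prop := LFull LEtaRoot
/-- Head reduction. -/
def LHStep : Lam → Lam → Prop := LHead LBetaRoot
/-- Multistep head reduction. -/
def LHSteps : Lam → Lam → Prop := Relation.ReflTransGen LHStep

/-- β-conversion (reflexive-symmetric-transitive closure of β-reduction). -/
def LBetaConv : Lam → Lam → Prop :=
  Relation.ReflTransGen (fun a b => LBeta a b ∨ LBeta b a)
/-- η-conversion. -/
def LEtaConv : Lam → Lam → Prop :=
  Relation.ReflTransGen (fun a b => LEta a b ∨ LEta b a)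

/-- Head normal forms: no head step out of `t`. -/
def Lam.LHNF (t : Lam) : Prop := ∀ u, ¬ LHStep t u

/-- Head convergence: `t ⇓h`. -/
def Lam.HConv (t : Lam) : Prop := ∃ h, LHSteps t h ∧ h.LHNF

/-- Ordinary contexts (one hole). -/
inductive LCtx : Type
  | hole : LCtx
  | lam : LCtx → LCtx
  | appL : LCtx → Lam → LCtx
  | appR : Lam → LCtx → LCtx

/-- Plugging (allowing variable capture). -/
def LCtx.fill : LCtx → Lam → Lam
  | .hole, t => t
  | .lam C, t => .lam (C.fill t)
  | .appL C u, t => .app (C.fill t) u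
  | .appR s C, t => .app s (C.fill t)

/-- Head contextual preorder on λ-terms. -/
def CtxLe (t u : Lam) : Prop := ∀ C : LCtx, (C.fill t).HConv → (C.fill u).HConv

/-! ### Checkers terms -/

inductive CTerm : Type
  | var : ℕ → CTerm
  | lam : Player → CTerm → CTerm
  | app : Player → CTerm → CTerm → CTerm
deriving DecidableEq

namespace CTerm

/-- Shift the free de Bruijn indices ≥ `d` by one. -/
def liftAt : CTerm → ℕ → CTerm
  | .var n, d => .var (if n < d then n else n + 1)
  | .lam p t, d => .lam p (t.liftAt (d + 1))
  | .app p t u, d => .app p (t.liftAt d) (u.liftAt d)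

/-- Capture-avoiding substitution of `u` for the de Bruijn index `x`. -/
def subst : CTerm → ℕ → CTerm → CTerm
  | .var n, x, u => if n = x then u else if x < n then .var (n - 1) else .var n
  | .lam p t, x, u => .lam p (t.subst (x + 1) (u.liftAt 0))
  | .app p t s, x, u => .app p (t.subst x u) (s.subst x u)

/-- The underlying ordinary λ-term of a checkers term. -/
def untag : CTerm → Lam
  | .var n => .var n
  | .lam _ t => .lam t.untag
  | .app _ t u => .app t.untag u.untag

end CTerm

/-- Player lifting: tag every abstraction and application with player `p`. -/
def Lam.tag : Lam → Player → CTerm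
  | .var n, _ => .var n
  | .lam t, p => .lam p (t.tag p)
  | .app t u, p => .app p (t.tag p) (u.tag p)

/-- Silent β root rule: the abstraction and the application carry the same player. -/
inductive SilentRoot : CTerm → CTerm → Prop
  | beta (p : Player) (t u : CTerm) : SilentRoot (.app p (.lam p t) u) (t.subst 0 u)

/-- Interaction β root rule: the application carries the opposite player of the abstraction. -/
inductive InterRoot : CTerm → CTerm → Prop
  | beta (p : Player) (t u : CTerm) : InterRoot (.app p.op (.lam p t) u) (t.subst 0 u)

/-- Closure of a root relation under all checkers contexts. -/
inductive CFull (R : CTerm → CTerm → Prop) : CTerm → CTerm → Prop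
  | root {t u : CTerm} : R t u → CFull R t u
  | lam (p : Player) {t u : CTerm} : CFull R t u → CFull R (.lam p t) (.lam p u)
  | appL (p : Player) {t t' : CTerm} (u : CTerm) : CFull R t t' → CFull R (.app p t u) (.app p t' u)
  | appR (p : Player) (t : CTerm) {u u' : CTerm} : CFull R u u' → CFull R (.app p t u) (.app p t u')

/-- Closure under applicative spine contexts `⟨·⟩ @_{q1} t1 … @_{qk} tk`. -/
inductive CSpine (R : CTerm → CTerm → Prop) : CTerm → CTerm → Prop
  | root {t u : CTerm} : R t u → CSpine R t u
  | appL (p : Player) {t t' : CTerm} (u : CTerm) : CSpine R t t' → CSpine R (.app p t u) (.app p t' u)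

/-- Closure under checkers head contexts `λ_{p1}x1…λ_{pn}xn.⟨·⟩ @_{q1} t1 … @_{qk} tk`. -/
inductive CHead (R : CTerm → CTerm → Prop) : CTerm → CTerm → Prop
  | spine {t u : CTerm} : CSpine R t u → CHead R t u
  | lam (p : Player) {t u : CTerm} : CHead R t u → CHead R (.lam p t) (.lam p u)

/-- Silent β-reduction `→τ`. -/
def StepTau : CTerm → CTerm → Prop := CFull SilentRoot
/-- Interaction β-reduction `→⊛`. -/
def StepInt : CTerm → CTerm → Prop := CFull InterRoot
/-- Checkers β-reduction `→βch`. -/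
def StepBch (t u : CTerm) : Prop := StepTau t u ∨ StepInt t u

/-- Silent head reduction `→hτ`. -/
def HStepTau : CTerm → CTerm → Prop := CHead SilentRoot
/-- Interaction head reduction `→h⊛`. -/
def HStepInt : CTerm → CTerm → Prop := CHead InterRoot
/-- Checkers head reduction `→hch`. -/
def HStepCh (t u : CTerm) : Prop := HStepTau t u ∨ HStepInt t u

/-- Checkers head normal form. -/
def CTerm.HNF (t : CTerm) : Prop := ∀ u, ¬ HStepCh t u

/-- `BigStep t k` means `t ⇓^k`: the (deterministic) checkers head evaluation of `t`
terminates and performs exactly `k` interaction steps. -/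
inductive BigStep : CTerm → ℕ → Prop
  | nf {t : CTerm} : t.HNF → BigStep t 0
  | silent {t u : CTerm} {k : ℕ} : HStepTau t u → BigStep u k → BigStep t k
  | inter {t u : CTerm} {k : ℕ} : HStepInt t u → BigStep u k → BigStep t (k + 1)

/-- `HRed t n i u`: a checkers head reduction sequence from `t` to `u` of length `n`
containing exactly `i` interaction steps. -/
inductive HRed : CTerm → ℕ → ℕ → CTerm → Prop
  | refl (t : CTerm) : HRed t 0 0 t
  | silent {t u s : CTerm} {n i : ℕ} : HStepTau t u → HRed u n i s → HRed t (n + 1) i s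
  | inter {t u s : CTerm} {n i : ℕ} : HStepInt t u → HRed u n i s → HRed t (n + 1) (i + 1) s

/-- Checkers contexts (one hole). -/
inductive CCtx : Type
  | hole : CCtx
  | lam : Player → CCtx → CCtx
  | appL : Player → CCtx → CTerm → CCtx
  | appR : Player → CTerm → CCtx → CCtx

/-- Plugging (allowing variable capture). -/
def CCtx.fill : CCtx → CTerm → CTerm
  | .hole, t => t
  | .lam p C, t => .lam p (C.fill t)
  | .appL p C u, t => .app p (C.fill t) u
  | .appR p s C, t => .app p s (C.fill t)

/-- Player lifting of ordinary contexts. -/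
def LCtx.tag : LCtx → Player → CCtx
  | .hole, _ => .hole
  | .lam C, p => .lam p (C.tag p)
  | .appL C u, p => .appL p (C.tag p) (u.tag p)
  | .appR s C, p => .appR p (s.tag p) (C.tag p)

/-- Checkers interaction preorder `≼ctx⊛` on checkers terms. -/
def IntCtxLe (t u : CTerm) : Prop :=
  ∀ (C : CCtx) (k : ℕ), BigStep (C.fill t) k → BigStep (C.fill u) k

/-- Checkers interaction improvement `≼imp⊛` on checkers terms. -/
def ImpCtxLe (t u : CTerm) : Prop :=
  ∀ (C : CCtx) (k : ℕ), BigStep (C.fill t) k → ∃ k', k' ≤ k ∧ BigStep (C.fill u) k'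

/-- Interaction preorder `⊑int` on ordinary λ-terms, via black lifting. -/
def IntLe (t u : Lam) : Prop := IntCtxLe (t.tag .black) (u.tag .black)

/-- Interaction improvement `⊑int·imp` on ordinary λ-terms, via black lifting. -/
def ImpLe (t u : Lam) : Prop := ImpCtxLe (t.tag .black) (u.tag .black)

/-- Interaction equivalence `≡int`. -/
def IntEq (t u : Lam) : Prop := IntLe t u ∧ IntLe u t

/-- Silent conversion `=τ`: reflexive-symmetric-transitive closure of `→τ`. -/
def SilentConv : CTerm → CTerm → Prop :=
  Relation.ReflTransGen (fun a b => StepTau a b ∨ StepTau b a)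


/-! ### Böhm preorders -/

/-- `n` abstractions in front of a term. -/
def Lam.absN : ℕ → Lam → Lam
  | 0, t => t
  | n + 1, t => .lam (Lam.absN n t)

/-- Left-nested application of a term to a list of arguments. -/
def Lam.appList : Lam → List Lam → Lam
  | t, [] => t
  | t, u :: us => Lam.appList (.app t u) us

/-- One unfolding of the Böhm preorder clauses. -/
def BohmClause (R : Lam → Lam → Prop) (t u : Lam) : Prop :=
  (¬ t.HConv) ∨
    ∃ (n y : ℕ) (ts us : List Lam),
      ts.length = us.length ∧
      LHSteps t (Lam.absN n (Lam.appList (.var y) ts)) ∧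
      LHSteps u (Lam.absN n (Lam.appList (.var y) us)) ∧
      ∀ (i : ℕ) (hi : i < ts.length) (hj : i < us.length), R (ts.get ⟨i, hi⟩) (us.get ⟨i, hj⟩)

/-- The Böhm preorder `⊑B`: the largest relation closed under the clauses. -/
def BohmLe (t u : Lam) : Prop :=
  ∃ R : Lam → Lam → Prop, (∀ a b, R a b → BohmClause R a b) ∧ R t u

/-- One unfolding of the extensional Böhm preorder clauses. -/
def BohmEtaClause (R : Lam → Lam → Prop) (t u : Lam) : Prop :=
  (¬ t.HConv) ∨
    ∃ (n y : ℕ) (ts us : List Lam) (h h' : Lam),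
      ts.length = us.length ∧
      LHSteps t h ∧ h.LHNF ∧ LEtaConv h (Lam.absN n (Lam.appList (.var y) ts)) ∧
      LHSteps u h' ∧ h'.LHNF ∧ LEtaConv h' (Lam.absN n (Lam.appList (.var y) us)) ∧
      ∀ (i : ℕ) (hi : i < ts.length) (hj : i < us.length), R (ts.get ⟨i, hi⟩) (us.get ⟨i, hj⟩)

/-- The extensional Böhm preorder `⊑Bλη`: the largest relation closed under the clauses. -/
def BohmEtaLe (t u : Lam) : Prop :=
  ∃ R : Lam → Lam → Prop, (∀ a b, R a b → BohmEtaClause R a b) ∧ R t u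

/-!
Replace every free variable of the black term `t` by a white tupling combinator
`λ x₁ … x_K b. b x₁ … x_K`, guarded by as many ticks as one likes, each costing one interaction,
and apply the result to white arguments, starting with further such probes. When `t` has the head
normal form `λ x₁ … xₙ. y t₁ … tₖ`, its `n` abstractions meet white applications and the probe in
place of `y` meets `k` black ones, so evaluation pays `n + k` interactions plus the ticks of `y`.
It then hands `t₁, …, tₖ`, still with probes for variables and padded to a tuple of length `K`, to
the next white argument `b`. The position of `b` on the stack depends on `n - k`, so numbering the
candidates for `b` by ticks separates `n` from `k`; distinct ticks for distinct variables then
identify `y`; and letting `b` be a selector continues the observation inside `tᵢ`. Hence the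
preorder observed by probing is a Böhm simulation, and it contains the interaction preorder because
substitutions are definable by contexts.
-/

/-! ### Simultaneous substitution -/

namespace CTerm

/-- Simultaneous renaming: index `n` becomes `ρ.get n`. -/
def rename : CTerm → Stream' ℕ → CTerm
  | .var n, ρ => .var (ρ.get n)
  | .lam p t, ρ => .lam p (t.rename (.cons 0 (ρ.map .succ)))
  | .app p t u, ρ => .app p (t.rename ρ) (u.rename ρ)

/-- The environment `σ` moved under one abstraction. -/
def shiftEnv (σ : Stream' CTerm) : Stream' CTerm :=
  .cons (.var 0) (σ.map (rename · Stream'.nats.tail))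

/-- Simultaneous capture-avoiding substitution: index `n` is replaced by `σ.get n`. An environment
is a stream, so that instantiating the binder of an abstraction amounts to `Stream'.cons`. -/
def subs : CTerm → Stream' CTerm → CTerm
  | .var n, σ => σ.get n
  | .lam p t, σ => .lam p (t.subs (shiftEnv σ))
  | .app p t u, σ => .app p (t.subs σ) (u.subs σ)

theorem rename_rename (t : CTerm) (ρ ρ' : Stream' ℕ) :
    (t.rename ρ).rename ρ' = t.rename (ρ.map ρ'.get) := by
  induction t generalizing ρ ρ' with
  | var n => rfl
  | lam p t ih => simp only [rename, ih, Stream'.map_cons, Stream'.map_map]; rfl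
  | app p t u iht ihu => simp only [rename, iht, ihu]

theorem subs_rename (t : CTerm) (ρ : Stream' ℕ) (σ : Stream' CTerm) :
    (t.rename ρ).subs σ = t.subs (ρ.map σ.get) := by
  induction t generalizing ρ σ with
  | var n => rfl
  | lam p t ih => simp only [rename, subs, ih, shiftEnv, Stream'.map_cons, Stream'.map_map]; rfl
  | app p t u iht ihu => simp only [rename, subs, iht, ihu]

theorem rename_subs (t : CTerm) (σ : Stream' CTerm) (ρ : Stream' ℕ) :
    (t.subs σ).rename ρ = t.subs (σ.map (rename · ρ)) := by
  induction t generalizing σ ρ with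
  | var n => rfl
  | lam p t ih =>
    simp only [rename, subs, ih, shiftEnv, Stream'.map_cons, Stream'.map_map, Function.comp_def,
      rename_rename]
    rfl
  | app p t u iht ihu => simp only [rename, subs, iht, ihu]

theorem subs_subs (t : CTerm) (σ τ : Stream' CTerm) :
    (t.subs σ).subs τ = t.subs (σ.map (subs · τ)) := by
  induction t generalizing σ τ with
  | var n => rfl
  | lam p t ih =>
    simp only [subs, ih, shiftEnv, Stream'.map_cons, Stream'.map_map, Function.comp_def,
      subs_rename, rename_subs]
    rfl
  | app p t u iht ihu => simp only [subs, iht, ihu]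

theorem shiftEnv_var : shiftEnv (Stream'.nats.map var) = Stream'.nats.map var :=
  Stream'.ext fun n => by cases n <;> rfl

theorem subs_var (t : CTerm) : t.subs (Stream'.nats.map var) = t := by
  induction t with
  | var n => rfl
  | lam p t ih => simp only [subs, shiftEnv_var, ih]
  | app p t u iht ihu => simp only [subs, iht, ihu]

theorem liftAt_eq_rename (t : CTerm) (d : ℕ) :
    t.liftAt d = t.rename (Stream'.nats.map fun n => if n < d then n else n + 1) := by
  induction t generalizing d with
  | var n => rfl
  | lam p t ih =>
    simp only [liftAt, rename, ih]
    refine congrArg (fun ρ => lam p (t.rename ρ)) (Stream'.ext fun n => ?_)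
    rcases n with _ | n
    · rfl
    · change (if n + 1 < d + 1 then n + 1 else n + 1 + 1) = (if n < d then n else n + 1) + 1
      grind
  | app p t u iht ihu => simp only [liftAt, rename, iht, ihu]

theorem liftAt_zero (t : CTerm) : t.liftAt 0 = t.rename Stream'.nats.tail :=
  liftAt_eq_rename t 0

theorem subst_eq_subs (t u : CTerm) (x : ℕ) :
    t.subst x u = t.subs (Stream'.nats.map fun n =>
      if n = x then u else if x < n then var (n - 1) else var n) := by
  induction t generalizing x u with
  | var n => rfl
  | lam p t ih =>
    simp only [subst, subs, ih, liftAt_zero]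
    refine congrArg (fun σ => lam p (t.subs σ)) (Stream'.ext fun n => ?_)
    rcases n with _ | n
    · rfl
    · change (if n + 1 = x + 1 then u.rename _ else if x + 1 < n + 1 then var n else var (n + 1)) =
        (if n = x then u else if x < n then var (n - 1) else var n).rename Stream'.nats.tail
      have nats_get (m : ℕ) : Stream'.nats.get m = m := rfl
      rcases lt_trichotomy n x with h | rfl | h
      · simp [h.ne, h.not_gt, rename, nats_get]
      · simp
      · simp [h.ne', h, rename, nats_get, Nat.sub_add_cancel (Nat.one_le_of_lt h)]
  | app p t s iht ihs => simp only [subst, subs, iht, ihs]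

theorem subst_zero_eq_subs (t u : CTerm) :
    t.subst 0 u = t.subs (.cons u (Stream'.nats.map var)) := by
  rw [subst_eq_subs]
  exact congrArg _ (Stream'.ext fun n => by cases n <;> rfl)

theorem subst_zero_subs_shiftEnv (t a : CTerm) (σ : Stream' CTerm) :
    (t.subs (shiftEnv σ)).subst 0 a = t.subs (.cons a σ) := by
  simp only [subst_zero_eq_subs, subs_subs, shiftEnv, Stream'.map_cons, Stream'.map_map,
    Function.comp_def, subs_rename]
  refine congrArg _ (congrArg _ (Stream'.ext fun n => ?_))
  exact subs_var _

theorem subs_subst_zero (t u : CTerm) (σ : Stream' CTerm) :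
    (t.subst 0 u).subs σ = t.subs (.cons (u.subs σ) σ) := by
  rw [subst_zero_eq_subs, subs_subs, Stream'.map_cons]
  rfl

theorem eventually_subs_congr (t : CTerm) :
    ∀ᶠ B in Filter.atTop, ∀ σ τ : Stream' CTerm,
      (∀ n < B, σ.get n = τ.get n) → t.subs σ = t.subs τ := by
  induction t with
  | var n => filter_upwards [Filter.eventually_gt_atTop n] with B hB σ τ h using h n hB
  | lam p t ih =>
    filter_upwards [ih] with B hB σ τ h
    refine congrArg (lam p) (hB _ _ fun n hn => ?_)
    cases n with
    | zero => rfl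
    | succ n => exact congrArg (rename · _) (h n (by omega))
  | app p t u iht ihu =>
    filter_upwards [iht, ihu] with B ht hu σ τ h
    simp only [subs, ht σ τ h, hu σ τ h]

end CTerm

/-! ### Head reduction and its cost -/

/-- The β root rule of the checkers calculus; the index is the number of interaction steps. -/
inductive BetaRoot : ℕ → CTerm → CTerm → Prop
  | beta (p q : Player) (t u : CTerm) :
      BetaRoot (Player.gamma q p) (.app q (.lam p t) u) (t.subst 0 u)

/-- A checkers head step performing `c` interactions, `c` being `0` or `1`. -/
abbrev HeadStep (c : ℕ) : CTerm → CTerm → Prop := CHead (BetaRoot c)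

theorem betaRoot_zero : BetaRoot 0 = SilentRoot := by
  ext t u
  constructor
  · generalize hc : 0 = c
    rintro ⟨p, q, t, u⟩
    obtain rfl : q = p := by by_contra hqp; simp [Player.gamma, hqp] at hc
    exact .beta q t u
  · rintro ⟨p, t, u⟩
    simpa [Player.gamma] using BetaRoot.beta p p t u

theorem betaRoot_one : BetaRoot 1 = InterRoot := by
  ext t u
  constructor
  · generalize hc : 1 = c
    rintro ⟨p, q, t, u⟩
    obtain rfl : q = p.op := by cases p <;> cases q <;> simp [Player.gamma, Player.op] at hc ⊢
    exact .beta p t u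
  · rintro ⟨p, t, u⟩
    have hp : Player.gamma p.op p = 1 := by cases p <;> rfl
    exact hp ▸ BetaRoot.beta p p.op t u

theorem hStepTau_eq_headStep : HStepTau = HeadStep 0 := by rw [HeadStep, betaRoot_zero]; rfl

theorem hStepInt_eq_headStep : HStepInt = HeadStep 1 := by rw [HeadStep, betaRoot_one]; rfl

theorem HeadStep.eq_zero_or_one {c : ℕ} {t u : CTerm} (h : HeadStep c t u) : c = 0 ∨ c = 1 := by
  induction h with
  | lam _ _ ih => exact ih
  | spine h =>
    induction h with
    | appL _ _ _ ih => exact ih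
    | root r =>
      obtain ⟨p, q, t, u⟩ := r
      cases p <;> cases q <;> simp [Player.gamma]

theorem hStepCh_iff_exists_headStep {t u : CTerm} : HStepCh t u ↔ ∃ c, HeadStep c t u := by
  rw [HStepCh, hStepTau_eq_headStep, hStepInt_eq_headStep]
  constructor
  · rintro (h | h)
    exacts [⟨0, h⟩, ⟨1, h⟩]
  · rintro ⟨c, h⟩
    obtain rfl | rfl := h.eq_zero_or_one
    exacts [.inl h, .inr h]

theorem CSpine.beta_unique {c d : ℕ} {t u v : CTerm} (h : CSpine (BetaRoot c) t u)
    (h' : CSpine (BetaRoot d) t v) : c = d ∧ u = v := by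
  induction h generalizing v with
  | root r =>
    obtain ⟨p, q, t, u⟩ := r
    rcases h' with ⟨⟨⟩⟩ | ⟨_, _, ⟨⟨⟩⟩⟩
    exact ⟨rfl, rfl⟩
  | appL p u s ih =>
    rcases h' with ⟨⟨⟩⟩ | ⟨_, _, s'⟩
    · nomatch s
    · obtain ⟨rfl, rfl⟩ := ih s'
      exact ⟨rfl, rfl⟩

theorem HeadStep.unique {c d : ℕ} {t u v : CTerm} (h : HeadStep c t u) (h' : HeadStep d t v) :
    c = d ∧ u = v := by
  induction h generalizing v with
  | lam p _ ih =>
    rcases h' with ⟨⟨⟨⟩⟩⟩ | ⟨_, h'⟩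
    obtain ⟨rfl, rfl⟩ := ih h'
    exact ⟨rfl, rfl⟩
  | spine s =>
    rcases h' with s' | ⟨_, h'⟩
    · exact s.beta_unique s'
    · nomatch s

namespace BigStep

theorem of_headStep {c k : ℕ} {t u : CTerm} (h : HeadStep c t u) (hu : BigStep u k) :
    BigStep t (k + c) := by
  obtain rfl | rfl := h.eq_zero_or_one
  · exact .silent (hStepTau_eq_headStep ▸ h) hu
  · exact .inter (hStepInt_eq_headStep ▸ h) hu

@[elab_as_elim]
theorem headStep_induction {motive : ∀ (t : CTerm) (k : ℕ), BigStep t k → Prop}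
    (nf : ∀ {t : CTerm} (h : t.HNF), motive t 0 (.nf h))
    (headStep : ∀ {c k : ℕ} {t u : CTerm} (h : HeadStep c t u) (hu : BigStep u k),
      motive u k hu → motive t (k + c) (.of_headStep h hu))
    {t : CTerm} {k : ℕ} (h : BigStep t k) : motive t k h := by
  induction h with
  | nf h => exact nf h
  | silent h hu ih => exact headStep (hStepTau_eq_headStep ▸ h) hu ih
  | inter h hu ih => exact headStep (hStepInt_eq_headStep ▸ h) hu ih

theorem exists_of_headStep {c k : ℕ} {t u : CTerm} (h : BigStep t k) (hs : HeadStep c t u) :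
    ∃ j, BigStep u j ∧ k = j + c := by
  induction h using headStep_induction with
  | nf hn => exact absurd (hStepCh_iff_exists_headStep.2 ⟨c, hs⟩) (hn u)
  | headStep hs' hu _ =>
    obtain ⟨rfl, rfl⟩ := hs.unique hs'
    exact ⟨_, hu, rfl⟩

theorem unique {t : CTerm} {j k : ℕ} (h : BigStep t j) (h' : BigStep t k) : j = k := by
  induction h using headStep_induction generalizing k with
  | @nf t hn =>
    induction h' using headStep_induction with
    | nf => rfl
    | headStep hs => exact absurd (hStepCh_iff_exists_headStep.2 ⟨_, hs⟩) (hn _)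
  | headStep hs _ ih =>
    obtain ⟨i, hi, rfl⟩ := h'.exists_of_headStep hs
    rw [ih hi]

end BigStep

theorem CTerm.hNF_lam_iff {p : Player} {t : CTerm} : (CTerm.lam p t).HNF ↔ t.HNF := by
  simp only [CTerm.HNF, hStepCh_iff_exists_headStep, not_exists]
  constructor
  · exact fun h u c hs => h _ c (.lam p hs)
  · rintro h _ c (⟨⟨⟨⟩⟩⟩ | ⟨_, hs⟩)
    exact h _ c hs

theorem bigStep_lam_iff {p : Player} {t : CTerm} {k : ℕ} :
    BigStep (.lam p t) k ↔ BigStep t k := by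
  constructor
  · generalize hs : CTerm.lam p t = s
    intro h
    induction h using BigStep.headStep_induction generalizing t with
    | nf hn => exact .nf (CTerm.hNF_lam_iff.1 (hs ▸ hn))
    | headStep h _ ih =>
      subst hs
      rcases h with ⟨⟨⟨⟩⟩⟩ | ⟨_, hs⟩
      exact .of_headStep hs (ih rfl)
  · intro h
    induction h using BigStep.headStep_induction with
    | nf hn => exact .nf (CTerm.hNF_lam_iff.2 hn)
    | headStep hs _ ih => exact .of_headStep (.lam p hs) ih

/-- The number of interactions in the head evaluation of `t`, `⊤` if the evaluation diverges. -/
noncomputable def cost (t : CTerm) : ℕ∞ := ⨅ (k : ℕ) (_ : BigStep t k), (k : ℕ∞)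

theorem BigStep.cost_eq {t : CTerm} {k : ℕ} (h : BigStep t k) : cost t = k :=
  le_antisymm (iInf₂_le k h) (le_iInf₂ fun _ h' => h.unique h' ▸ le_rfl)

theorem cost_ne_top_iff {t : CTerm} : cost t ≠ ⊤ ↔ ∃ k, BigStep t k := by
  simp [cost, iInf_eq_top]

theorem cost_lam (p : Player) (t : CTerm) : cost (.lam p t) = cost t := by
  simp only [cost, bigStep_lam_iff]

theorem CTerm.HNF.cost_eq {t : CTerm} (h : t.HNF) : cost t = 0 := BigStep.cost_eq (.nf h)

theorem HeadStep.cost_eq {c : ℕ} {t u : CTerm} (h : HeadStep c t u) : cost t = cost u + c := by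
  by_cases hu : ∃ k, BigStep u k
  · obtain ⟨k, hk⟩ := hu
    rw [hk.cost_eq, (hk.of_headStep h).cost_eq, Nat.cast_add]
  · have ht : ¬ ∃ k, BigStep t k := fun ⟨k, hk⟩ =>
      let ⟨j, hj, _⟩ := hk.exists_of_headStep h
      hu ⟨j, hj⟩
    rw [← cost_ne_top_iff, not_not] at hu ht
    rw [hu, ht, top_add]

/-! ### Spines -/

namespace CTerm

/-- The application `t @_p a₁ … @_p aₙ`. -/
def apps (p : Player) (t : CTerm) (as : List CTerm) : CTerm := as.foldl (.app p) t

/-- The abstraction `λ_p x₁ … xₙ. t`. -/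
def lams (p : Player) (n : ℕ) (t : CTerm) : CTerm := (lam p)^[n] t

theorem apps_append (p : Player) (t : CTerm) (as bs : List CTerm) :
    apps p t (as ++ bs) = apps p (apps p t as) bs :=
  List.foldl_append

theorem subs_apps (p : Player) (t : CTerm) (as : List CTerm) (σ : Stream' CTerm) :
    (apps p t as).subs σ = apps p (t.subs σ) (as.map (·.subs σ)) := by
  induction as generalizing t with
  | nil => rfl
  | cons a _ ih => exact ih _

theorem lams_add (p : Player) (m n : ℕ) (t : CTerm) : lams p (m + n) t = lams p m (lams p n t) :=
  Function.iterate_add_apply ..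

theorem lams_succ (p : Player) (n : ℕ) (t : CTerm) : lams p (n + 1) t = lam p (lams p n t) :=
  Function.iterate_succ_apply' ..

end CTerm

open CTerm

theorem CSpine.apps {R : CTerm → CTerm → Prop} {t u : CTerm} (h : CSpine R t u) (p : Player)
    (as : List CTerm) : CSpine R (apps p t as) (apps p u as) := by
  induction as generalizing t u with
  | nil => exact h
  | cons a _ ih => exact ih (.appL p a h)

theorem CSpine.beta_subs (p q : Player) (t a : CTerm) (σ : Stream' CTerm) :
    CSpine (BetaRoot (Player.gamma q p)) (.app q ((lam p t).subs σ) a) (t.subs (.cons a σ)) := by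
  rw [← subst_zero_subs_shiftEnv]
  exact .root (.beta ..)

theorem CHead.lams {R : CTerm → CTerm → Prop} {t u : CTerm} (h : CHead R t u) (p : Player)
    (n : ℕ) : CHead R (lams p n t) (lams p n u) := by
  induction n generalizing t u with
  | zero => exact h
  | succ _ ih => exact ih (.lam p h)

/-- `SpineRed c t u`: a sequence of head steps from `t` to `u` performing `c` interactions in total
and never entering an abstraction, so that it survives applying `t` and `u` to arguments. -/
inductive SpineRed : ℕ → CTerm → CTerm → Prop
  | refl (t : CTerm) : SpineRed 0 t t
  | head {c d : ℕ} {t u v : CTerm} : CSpine (BetaRoot c) t u → SpineRed d u v →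
      SpineRed (c + d) t v

namespace SpineRed

theorem trans {c d : ℕ} {t u v : CTerm} (h : SpineRed c t u) (h' : SpineRed d u v) :
    SpineRed (c + d) t v := by
  induction h with
  | refl t => rwa [Nat.zero_add]
  | head s _ ih =>
    rw [Nat.add_assoc]
    exact .head s (ih h')

theorem apps {c : ℕ} {t u : CTerm} (h : SpineRed c t u) (p : Player) (as : List CTerm) :
    SpineRed c (apps p t as) (apps p u as) := by
  induction h with
  | refl t => exact .refl _
  | head s _ ih => exact .head (s.apps p as) ih

theorem cost_eq {c : ℕ} {t u : CTerm} (h : SpineRed c t u) : cost t = cost u + c := by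
  induction h with
  | refl t => simp
  | head s _ ih => rw [HeadStep.cost_eq (.spine s), ih, Nat.cast_add, add_right_comm, add_assoc]

theorem lams_apps (p q : Player) (t : CTerm) (as : List CTerm) (σ : Stream' CTerm) :
    SpineRed (as.length * Player.gamma q p) (CTerm.apps q ((lams p as.length t).subs σ) as)
      (t.subs (as.reverse ++ₛ σ)) := by
  induction as generalizing σ with
  | nil => rw [List.length_nil, Nat.zero_mul]; exact refl _
  | cons a as ih =>
    rw [List.length_cons, lams_succ, Nat.add_mul, Nat.one_mul, Nat.add_comm, List.reverse_cons,
      Stream'.append_append_stream]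
    exact .head ((CSpine.beta_subs p q _ a σ).apps q as) (ih _)

end SpineRed

theorem CTerm.hNF_apps (p : Player) {t : CTerm} (hlam : ∀ q s, t ≠ lam q s)
    (hstep : ∀ c s, ¬ CSpine (BetaRoot c) t s) (as : List CTerm) : (apps p t as).HNF := by
  induction as generalizing t with
  | nil =>
    simp only [HNF, hStepCh_iff_exists_headStep, not_exists]
    rintro _ c (h | ⟨q, -⟩)
    exacts [hstep c _ h, hlam q _ rfl]
  | cons a _ ih =>
    refine ih (by simp) ?_
    rintro c _ (⟨⟨⟩⟩ | ⟨_, _, h⟩)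
    exacts [hlam _ _ rfl, hstep c _ h]

theorem cost_apps_var (p : Player) (n : ℕ) (as : List CTerm) : cost (apps p (var n) as) = 0 :=
  (CTerm.hNF_apps p (by simp) (by rintro _ _ ⟨⟨⟩⟩) as).cost_eq

/-! ### Head reduction of ordinary terms -/

namespace Lam

theorem tag_liftAt (t : Lam) (p : Player) (d : ℕ) : (t.liftAt d).tag p = (t.tag p).liftAt d := by
  induction t generalizing d with
  | var n => rfl
  | lam t ih => exact congrArg (CTerm.lam p) (ih _)
  | app t u iht ihu => exact congrArg₂ (CTerm.app p) (iht d) (ihu d)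

theorem tag_subst (t u : Lam) (p : Player) (x : ℕ) :
    (t.subst x u).tag p = (t.tag p).subst x (u.tag p) := by
  induction t generalizing x u with
  | var n => simp only [subst, tag, CTerm.subst]; split_ifs <;> rfl
  | lam t ih => simp only [subst, tag, CTerm.subst, ih, tag_liftAt]
  | app t s iht ihs => simp only [subst, tag, CTerm.subst, iht, ihs]

theorem tag_absN (n : ℕ) (t : Lam) (p : Player) : (absN n t).tag p = lams p n (t.tag p) := by
  induction n with
  | zero => rfl
  | succ n ih => rw [lams_succ, ← ih]; rfl

theorem tag_appList (t : Lam) (ts : List Lam) (p : Player) :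
    (appList t ts).tag p = apps p (t.tag p) (ts.map (·.tag p)) := by
  induction ts generalizing t with
  | nil => rfl
  | cons u _ ih => exact ih _

theorem appList_append_singleton (t : Lam) (ts : List Lam) (u : Lam) :
    appList t (ts ++ [u]) = .app (appList t ts) u := by
  induction ts generalizing t with
  | nil => rfl
  | cons _ _ ih => exact ih _

theorem lHNF_lam_iff {t : Lam} : (lam t).LHNF ↔ t.LHNF := by
  constructor
  · exact fun h u hs => h _ (.lam hs)
  · rintro h _ (⟨⟨⟨⟩⟩⟩ | hs)
    exact h _ hs

theorem LHNF.of_app {t u : Lam} (h : (app t u).LHNF) : t.LHNF ∧ ∀ s, t ≠ lam s := by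
  have hlam (s : Lam) : t ≠ lam s := by
    rintro rfl
    exact h _ (.spine (.root (.beta ..)))
  refine ⟨?_, hlam⟩
  rintro _ (hs | _)
  exacts [h _ (.spine (.appL _ hs)), hlam _ rfl]

theorem LHNF.exists_eq_absN_appList {t : Lam} (h : t.LHNF) :
    ∃ n y ts, t = absN n (appList (.var y) ts) := by
  induction t with
  | var y => exact ⟨0, y, [], rfl⟩
  | lam t ih =>
    obtain ⟨n, y, ts, rfl⟩ := ih (lHNF_lam_iff.1 h)
    exact ⟨n + 1, y, ts, rfl⟩
  | app t u ih =>
    obtain ⟨ht, hlam⟩ := h.of_app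
    obtain ⟨_ | n, y, ts, rfl⟩ := ih ht
    · exact ⟨0, y, ts ++ [u], (appList_append_singleton _ _ _).symm⟩
    · exact absurd rfl (hlam _)

theorem HConv.exists_lHSteps_absN_appList {t : Lam} (h : t.HConv) :
    ∃ n y ts, LHSteps t (absN n (appList (.var y) ts)) := by
  obtain ⟨_, hs, hn⟩ := h
  obtain ⟨n, y, ts, rfl⟩ := hn.exists_eq_absN_appList
  exact ⟨n, y, ts, hs⟩

theorem HConv.lam {t : Lam} (h : t.HConv) : (lam t).HConv := by
  obtain ⟨s, hs, hn⟩ := h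
  exact ⟨_, hs.lift Lam.lam fun _ _ => .lam, lHNF_lam_iff.2 hn⟩

end Lam

theorem LSpine.tag_subs {t u : Lam} (h : LSpine LBetaRoot t u) (p : Player) (σ : Stream' CTerm) :
    CSpine (BetaRoot 0) ((t.tag p).subs σ) ((u.tag p).subs σ) := by
  induction h with
  | appL s _ ih => exact .appL p _ ih
  | root r =>
    obtain ⟨t, s⟩ := r
    rw [Lam.tag_subst, subs_subst_zero, ← subst_zero_subs_shiftEnv, betaRoot_zero]
    exact .root (.beta ..)

theorem BigStep.acc {t : CTerm} {k : ℕ} (h : BigStep t k) : Acc (flip HStepCh) t := by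
  induction h using headStep_induction with
  | nf hn => exact ⟨_, fun u hu => absurd hu (hn u)⟩
  | headStep hs _ ih =>
    refine ⟨_, fun v hv => ?_⟩
    obtain ⟨d, hd⟩ := hStepCh_iff_exists_headStep.1 hv
    exact (hs.unique hd).2 ▸ ih

section InteractionCost

variable (p q : Player)

theorem LHStep.cost_eq {t u : Lam} (hs : LHStep t u) (σ : Stream' CTerm) (as : List CTerm) :
    cost (apps q ((t.tag p).subs σ) as) = cost (apps q ((u.tag p).subs σ) as) := by
  induction hs generalizing σ as with
  | spine h => simpa using HeadStep.cost_eq (.spine ((h.tag_subs p σ).apps q as))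
  | @lam t u _ ih =>
    cases as with
    | nil =>
      exact (cost_lam p _).trans ((ih (shiftEnv σ) []).trans (cost_lam p _).symm)
    | cons a as =>
      have beta (s : Lam) :=
        HeadStep.cost_eq (.spine ((CSpine.beta_subs p q (s.tag p) a σ).apps q as))
      exact (beta t).trans ((congrArg (· + _) (ih _ as)).trans (beta u).symm)

theorem LHSteps.cost_eq {t u : Lam} (hs : LHSteps t u) (σ : Stream' CTerm) (as : List CTerm) :
    cost (apps q ((t.tag p).subs σ) as) = cost (apps q ((u.tag p).subs σ) as) := by
  induction hs with
  | refl => rfl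
  | tail _ hs ih => rw [ih, hs.cost_eq p q]

theorem Lam.hConv_of_acc (u : Lam) (n : ℕ) (σ : Stream' CTerm) (as : List CTerm)
    (h : Acc (flip HStepCh) (lams p n (apps q ((u.tag p).subs σ) as))) : u.HConv := by
  generalize hx : lams p n (apps q ((u.tag p).subs σ) as) = x at h
  induction h generalizing u n σ as with | intro x hacc ih
  clear hacc
  subst hx
  induction u generalizing n σ as with
  | var y => exact ⟨_, .refl, by rintro _ ⟨⟨⟨⟩⟩⟩⟩
  | lam u ihu =>
    cases as with
    | nil => exact (ihu (n + 1) (shiftEnv σ) [] ih).lam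
    | cons a as =>
      have step : HeadStep _ _ _ :=
        .lams (.spine ((CSpine.beta_subs p q (u.tag p) a σ).apps q as)) p n
      exact (ih _ (hStepCh_iff_exists_headStep.2 ⟨_, step⟩) u n _ as rfl).lam
  | app u v =>
    by_cases hn : (app u v).LHNF
    · exact ⟨_, .refl, hn⟩
    obtain ⟨s, hs⟩ : ∃ s, LHStep (app u v) s := by simpa [LHNF] using hn
    obtain ⟨hs'⟩ := hs
    have step : HeadStep 0 _ _ := .lams (.spine ((hs'.tag_subs p σ).apps q as)) p n
    obtain ⟨r, hr, hn⟩ := ih _ (hStepCh_iff_exists_headStep.2 ⟨_, step⟩) s n σ as rfl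
    exact ⟨r, .head (.spine hs') hr, hn⟩

theorem Lam.hConv_of_cost_ne_top {u : Lam} {σ : Stream' CTerm} {as : List CTerm}
    (h : cost (apps q ((u.tag p).subs σ) as) ≠ ⊤) : u.HConv :=
  let ⟨_, hk⟩ := cost_ne_top_iff.1 h
  hConv_of_acc p q u 0 σ as hk.acc

end InteractionCost

/-! ### Probes -/

/-- The term `t` guarded by `c` redexes `(λ_• x. x) @_∘ ⟨·⟩`, each of which costs one interaction
to remove. -/
def ticks (c : ℕ) (t : CTerm) : CTerm := (app .white (lam .black (var 0)))^[c] t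

theorem spineRed_ticks (c : ℕ) (t : CTerm) : SpineRed c (ticks c t) t := by
  induction c with
  | zero => exact .refl t
  | succ c ih =>
    rw [ticks, Function.iterate_succ_apply', Nat.add_comm]
    exact .head (.root (.beta .black .white (var 0) _)) ih

/-- The body `b x₁ … x_K` of the tupling combinator `λ x₁ … x_K b. b x₁ … x_K`. -/
def tupleBody (K : ℕ) : CTerm :=
  apps .white (var 0) ((Stream'.nats.tail.map var).take K).reverse

/-- The white tupling combinator `λ x₁ … x_K b. b x₁ … x_K`, guarded by `c` ticks. -/
def probe (K c : ℕ) : CTerm := ticks c (lams .white (K + 1) (tupleBody K))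

theorem tupleBody_subs {K : ℕ} {as : List CTerm} (hK : as.length = K) (b : CTerm)
    (σ : Stream' CTerm) : (tupleBody K).subs ((as ++ [b]).reverse ++ₛ σ) = apps .white b as := by
  have hvars : (Stream'.nats.tail.map var).map (·.subs ((as ++ [b]).reverse ++ₛ σ)) =
      as.reverse ++ₛ σ := by
    rw [List.reverse_append]
    rfl
  rw [tupleBody, subs_apps, List.map_reverse, Stream'.map_take, hvars,
    Stream'.take_append_of_le_length (h := by simp [hK]), List.take_of_length_le (by simp [hK]),
    List.reverse_reverse, List.reverse_append]
  rfl

theorem spineRed_probe {K : ℕ} {ts ss : List CTerm} (hK : ts.length + ss.length = K) (c : ℕ)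
    (b : CTerm) :
    SpineRed (c + ts.length) (apps .white (apps .black (probe K c) ts) (ss ++ [b]))
      (apps .white b (ts ++ ss)) := by
  have black := SpineRed.lams_apps .white .black (lams .white (ss.length + 1) (tupleBody K)) ts
    (Stream'.nats.map var)
  have white := SpineRed.lams_apps .white .white (tupleBody K) (ss ++ [b])
    (ts.reverse ++ₛ Stream'.nats.map var)
  rw [subs_var, ← lams_add, ← Nat.add_assoc, hK] at black
  rw [← Stream'.append_append_stream, ← List.reverse_append, ← List.append_assoc,
    tupleBody_subs (by simp [hK]), List.length_append] at white
  have red :=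
    ((((spineRed_ticks c _).apps .black ts).trans black).apps .white (ss ++ [b])).trans white
  simpa [probe, Player.gamma] using red

theorem spineRed_selector {K i : ℕ} {as : List CTerm} (hK : as.length = K) (hi : i < as.length) :
    SpineRed 0 (apps .white (lams .white K (var (K - 1 - i))) as) as[i] := by
  subst hK
  have h := SpineRed.lams_apps .white .white (var (as.length - 1 - i)) as (Stream'.nats.map var)
  have hget : (as.reverse ++ₛ Stream'.nats.map var).get (as.length - 1 - i) = as[i] := by
    rw [Stream'.get_append_left _ _ _ (by rw [List.length_reverse]; omega), List.getElem_reverse]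
    congr 1
    omega
  rwa [subs_var, subs, hget] at h

/-- The black lifting of `t` in which each free variable `x` is replaced by a probe with
`c.get x` ticks. -/
def probed (K : ℕ) (c : Stream' ℕ) (t : Lam) : CTerm := (t.tag .black).subs (c.map (probe K))

/-- The first `n` probes of the stack instantiate the abstractions of `t`, and `ss` completes the
arguments `ts` to a tuple, which is then handed over to `b`. -/
theorem cost_probed {t : Lam} {n y : ℕ} {ts : List Lam}
    (ht : LHSteps t (Lam.absN n (Lam.appList (.var y) ts))) {K : ℕ} {ss : List CTerm}
    (hK : ts.length + ss.length = K) (c : Stream' ℕ) (b : CTerm) (S : List CTerm) :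
    cost (apps .white (probed K (c.drop n) t)
        (((c.take n).map (probe K)).reverse ++ (ss ++ b :: S))) =
      cost (apps .white b (ts.map (probed K c) ++ ss ++ S)) + (n + ts.length + c.get y : ℕ) := by
  have fire : SpineRed (c.get y + ts.length)
      (apps .white (((Lam.appList (.var y) ts).tag .black).subs (c.map (probe K))) (ss ++ [b]))
      (apps .white b (ts.map (probed K c) ++ ss)) := by
    have h := spineRed_probe (ts := ts.map (probed K c)) (by simpa using hK) (c.get y) b
    rw [Lam.tag_appList, subs_apps, List.map_map]
    rwa [List.length_map] at h
  have beta := SpineRed.lams_apps .black .white ((Lam.appList (.var y) ts).tag .black)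
    ((c.take n).map (probe K)).reverse ((c.drop n).map (probe K))
  rw [List.reverse_reverse, ← Stream'.map_append_stream, Stream'.append_take_drop,
    List.length_reverse, List.length_map, Stream'.length_take, ← Lam.tag_absN] at beta
  have red := ((beta.apps .white (ss ++ [b])).trans fire).apps .white S
  rw [← apps_append, ← apps_append, ← apps_append, List.append_assoc, List.append_assoc,
    List.singleton_append] at red
  rw [probed, ht.cost_eq, red.cost_eq]
  simp [Player.gamma, add_assoc, add_comm]

open Filter

theorem cost_ticks_var (d x : ℕ) (S : List CTerm) :
    cost (apps .white (ticks d (var x)) S) = d := by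
  rw [((spineRed_ticks d (var x)).apps .white S).cost_eq, cost_apps_var, zero_add]

section ProbedHeadForm

variable {t : Lam} {n y : ℕ} {ts : List Lam}

theorem cost_probed_ticks (ht : LHSteps t (Lam.absN n (Lam.appList (.var y) ts))) {K : ℕ}
    {ss : List CTerm} (hK : ts.length + ss.length = K) (c : Stream' ℕ) (d : ℕ) (S : List CTerm) :
    cost (apps .white (probed K (c.drop n) t)
        (((c.take n).map (probe K)).reverse ++ (ss ++ ticks d (var 0) :: S))) =
      (n + ts.length + c.get y + d : ℕ) := by
  rw [cost_probed ht hK, List.append_assoc, cost_ticks_var, ← Nat.cast_add, Nat.add_comm]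

/-- The stack holds more arguments than the probe needs, so that the amount of ticks `d e` reveals
which of them is the one in position `K`. -/
theorem cost_probed_const (ht : LHSteps t (Lam.absN n (Lam.appList (.var y) ts))) {j e K M : ℕ}
    (hM : n + j = M) (hK : ts.length + j + e = K) (d : ℕ → ℕ) :
    cost (apps .white (probed K (.const 0) t)
        (List.replicate M (probe K 0) ++ (List.range (K + 1)).map fun i => ticks (d i) (var 0))) =
      (n + ts.length + d e : ℕ) := by
  set f := fun i => ticks (d i) (var 0)
  have hprobes : (((Stream'.const 0).take n).map (probe K)).reverse =
      List.replicate n (probe K 0) := List.ext_getElem (by simp) (by simp)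
  have hrange : (List.range (K + 1)).map f =
      (List.range e).map f ++ f e :: (List.range (K - e)).map fun i => f (e + 1 + i) := by
    rw [show K + 1 = e + 1 + (K - e) by omega, List.range_add, List.range_succ]
    simp [Function.comp_def]
  have h := cost_probed_ticks ht (ss := List.replicate j (probe K 0) ++ (List.range e).map f)
    (by simpa [Nat.add_assoc] using hK) (.const 0) (d e)
    ((List.range (K - e)).map fun i => f (e + 1 + i))
  rwa [hprobes, Stream'.drop_const, Stream'.get_const, Nat.add_zero, List.append_assoc,
    ← List.append_assoc, ← List.replicate_add, hM, ← hrange] at h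

theorem cost_probed_selector (ht : LHSteps t (Lam.absN n (Lam.appList (.var y) ts))) {K : ℕ}
    (hK : ts.length ≤ K) (c : Stream' ℕ) {i : ℕ} (hi : i < ts.length) (S : List CTerm) :
    cost (apps .white (probed K (c.drop n) t) (((c.take n).map (probe K)).reverse ++
        (List.replicate (K - ts.length) (var 0) ++ lams .white K (var (K - 1 - i)) :: S))) =
      cost (apps .white (probed K c ts[i]) S) + (n + ts.length + c.get y : ℕ) := by
  set ss := List.replicate (K - ts.length) (var 0)
  have hsel := spineRed_selector (K := K) (as := ts.map (probed K c) ++ ss) (i := i)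
    (by simp [ss, hK]) (by simp; omega)
  rw [cost_probed ht (by simp [ss, hK]), apps_append, (hsel.apps .white S).cost_eq]
  simp [hi]

end ProbedHeadForm

/-! ### Separation -/

/-- The preorder on ordinary terms observed by probing: for all sufficiently wide probes, whenever
`t` converges with its free variables replaced by probes and against a stack `S`, then so does `u`,
with the same number of interactions. -/
def ProbeLe (t u : Lam) : Prop :=
  ∀ᶠ K in atTop, ∀ (c : Stream' ℕ) (S : List CTerm),
    cost (apps .white (probed K c t) S) ≠ ⊤ →
      cost (apps .white (probed K c u) S) = cost (apps .white (probed K c t) S)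

namespace ProbeLe

variable {t u : Lam} {n m y z : ℕ} {ts us : List Lam}

theorem hConv (h : ProbeLe t u) (ht : t.HConv) : u.HConv := by
  obtain ⟨n, y, ts, ht⟩ := ht.exists_lHSteps_absN_appList
  obtain ⟨K, h, hK⟩ := (h.and (eventually_ge_atTop ts.length)).exists
  have htc := cost_probed_ticks ht (ss := List.replicate (K - ts.length) (var 0)) (K := K)
    (by simp [hK]) (.const 0) 0 []
  have hfin := htc.trans_ne (ENat.natCast_ne_top _)
  exact Lam.hConv_of_cost_ne_top _ _ ((h _ _ hfin).trans_ne hfin)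

theorem arity_eq (h : ProbeLe t u) (ht : LHSteps t (Lam.absN n (Lam.appList (.var y) ts)))
    (hu : LHSteps u (Lam.absN m (Lam.appList (.var z) us))) :
    n = m ∧ ts.length = us.length := by
  obtain ⟨K, h, hK⟩ := (h.and (eventually_ge_atTop (ts.length + us.length + n + m))).exists
  have agree (d : ℕ → ℕ) : m + us.length + d (K - us.length - n) =
      n + ts.length + d (K - ts.length - m) := by
    have htc := cost_probed_const ht (j := m) (e := K - ts.length - m) (K := K) rfl (by omega) d
    have huc := cost_probed_const hu (j := n) (e := K - us.length - n) (K := K)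
      (Nat.add_comm m n) (by omega) d
    have hcost := h _ _ (htc.trans_ne (ENat.natCast_ne_top _))
    exact_mod_cast huc.symm.trans (hcost.trans htc)
  have hsum := agree fun _ => 0
  have hpos := agree id
  simp only [id] at hsum hpos
  omega

theorem head_eq (h : ProbeLe t u) (ht : LHSteps t (Lam.absN n (Lam.appList (.var y) ts)))
    (hu : LHSteps u (Lam.absN n (Lam.appList (.var z) us))) (hlen : ts.length = us.length) :
    y = z := by
  obtain ⟨K, h, hK⟩ := (h.and (eventually_ge_atTop ts.length)).exists
  have htc := cost_probed_ticks ht (ss := List.replicate (K - ts.length) (var 0)) (K := K)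
    (by simp [hK]) Stream'.nats 0 []
  have huc := cost_probed_ticks hu (ss := List.replicate (K - ts.length) (var 0)) (K := K)
    (by simp [hK, ← hlen]) Stream'.nats 0 []
  have hcost := h _ _ (htc.trans_ne (ENat.natCast_ne_top _))
  have hy : n + us.length + z + 0 = n + ts.length + y + 0 := by
    exact_mod_cast huc.symm.trans (hcost.trans htc)
  omega

theorem getElem (h : ProbeLe t u) (ht : LHSteps t (Lam.absN n (Lam.appList (.var y) ts)))
    (hu : LHSteps u (Lam.absN n (Lam.appList (.var y) us))) (hlen : ts.length = us.length)
    {i : ℕ} (hi : i < ts.length) (hi' : i < us.length) : ProbeLe ts[i] us[i] := by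
  filter_upwards [h, eventually_ge_atTop ts.length] with K h hK c S hS
  have htc := cost_probed_selector ht hK c hi S
  have huc := cost_probed_selector hu (hlen ▸ hK) c hi' S
  rw [← hlen] at huc
  have hcost := h _ _ (htc.trans_ne (by simpa using hS))
  rw [htc, huc] at hcost
  exact ENat.add_left_injective_of_ne_top (ENat.natCast_ne_top _) hcost

theorem bohmClause (h : ProbeLe t u) : BohmClause ProbeLe t u := by
  by_cases ht : t.HConv
  · obtain ⟨n, y, ts, ht'⟩ := ht.exists_lHSteps_absN_appList
    obtain ⟨m, z, us, hu⟩ := (h.hConv ht).exists_lHSteps_absN_appList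
    obtain ⟨rfl, hlen⟩ := h.arity_eq ht' hu
    obtain rfl := h.head_eq ht' hu hlen
    exact .inr ⟨n, y, ts, us, hlen, ht', hu, fun _ hi hi' => h.getElem ht' hu hlen hi hi'⟩
  · exact .inl ht

end ProbeLe

/-! ### Contexts -/

theorem CCtx.exists_fill_eq_apps_lams (p q : Player) (n : ℕ) (as : List CTerm) :
    ∃ C : CCtx, ∀ t, C.fill t = apps q (lams p n t) as := by
  induction as using List.reverseRecOn with
  | nil =>
    induction n with
    | zero => exact ⟨.hole, fun _ => rfl⟩
    | succ n ih =>
      obtain ⟨C, hC⟩ := ih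
      exact ⟨.lam p C, fun t => by rw [lams_succ, apps, List.foldl_nil, fill, hC]; rfl⟩
  | append_singleton as a ih =>
    obtain ⟨C, hC⟩ := ih
    exact ⟨.appL q C a, fun t => by rw [apps_append, ← hC]; rfl⟩

theorem IntCtxLe.cost_fill_eq {t u : CTerm} (h : IntCtxLe t u) {C : CCtx}
    (ht : cost (C.fill t) ≠ ⊤) : cost (C.fill u) = cost (C.fill t) := by
  obtain ⟨k, hk⟩ := cost_ne_top_iff.1 ht
  rw [hk.cost_eq, (h C k hk).cost_eq]

/-- Substitutions are definable by contexts: abstract over finitely many variables, then apply. -/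
theorem IntCtxLe.cost_apps_subs_eq {t u : CTerm} (h : IntCtxLe t u) (p : Player)
    (σ : Stream' CTerm) (as : List CTerm) (ht : cost (apps p (t.subs σ) as) ≠ ⊤) :
    cost (apps p (u.subs σ) as) = cost (apps p (t.subs σ) as) := by
  obtain ⟨B, hBt, hBu⟩ := ((eventually_subs_congr t).and (eventually_subs_congr u)).exists
  set ids : Stream' CTerm := Stream'.nats.map var
  have htake (n : ℕ) (hn : n < B) : (σ.take B ++ₛ ids).get n = σ.get n := by
    rw [Stream'.get_append_left _ _ _ (by simpa using hn), Stream'.take_get]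
  obtain ⟨C, hC⟩ := CCtx.exists_fill_eq_apps_lams p p B ((σ.take B).reverse ++ as)
  have cost_fill (s : CTerm) (hs : s.subs (σ.take B ++ₛ ids) = s.subs σ) :
      cost (C.fill s) = cost (apps p (s.subs σ) as) := by
    have red := (SpineRed.lams_apps p p s (σ.take B).reverse ids).apps p as
    rw [subs_var, List.length_reverse, Stream'.length_take, List.reverse_reverse, hs] at red
    rw [hC, apps_append, red.cost_eq]
    simp [Player.gamma]
  rw [← cost_fill t (hBt _ _ htake)] at ht ⊢
  rw [← cost_fill u (hBu _ _ htake)]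
  exact h.cost_fill_eq ht

theorem IntLe.probeLe {t u : Lam} (h : IntLe t u) : ProbeLe t u :=
  .of_forall fun K c S => IntCtxLe.cost_apps_subs_eq h .white (c.map (probe K)) S

/-- Completeness: the interaction preorder is included in the Böhm preorder. -/
theorem interaction_included_in_bohm (t u : Lam) (h : IntLe t u) : BohmLe t u :=
  ⟨ProbeLe, fun _ _ h => h.bohmClause, h.probeLe⟩
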